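/- arXiv:1704.08072 — 3 statements merged into one kernel-verified Lean document; each statement's English description precedes it below -/
import Mathlib

section
/- The sequence x_0 = 0, x_{k+1} = G(x_k) converges (componentwise) to a limit m, and m is the minimal nonnegative solution of x = G(x): m ≥ 0, G(m) = m, and m ≤ x for every nonnegative solution x of x = G(x). -/
noncomputable def Gmap (n : ℕ) (α : ℝ) (v : Fin n → ℝ)
    (R : Matrix (Fin n) (Fin n × Fin n) ℝ) (x : Fin n → ℝ) : Fin n → ℝ :=
  α • R.mulVec (fun p => x p.1 * x p.2) + (1 - α) • v

theorem Gmap_apply_aux (n : ℕ) (α : ℝ) (v : Fin n → ℝ)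
    (R : Matrix (Fin n) (Fin n × Fin n) ℝ) (x : Fin n → ℝ) (i : Fin n) :
    Gmap n α v R x i = α * ∑ p, R i p * (x p.1 * x p.2) + (1 - α) * v i := by
  simp [Gmap, Matrix.mulVec, dotProduct]

theorem stmt_6 (n : ℕ) (hn : 1 ≤ n) (α : ℝ) (hα : α ∈ Set.Ioo (0:ℝ) 1)
    (v : Fin n → ℝ) (hv : ∀ i, 0 ≤ v i) (hv1 : ∑ i, v i = 1)
    (R : Matrix (Fin n) (Fin n × Fin n) ℝ) (hR : ∀ i j, 0 ≤ R i j)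
    (hRs : ∀ j, ∑ i, R i j = 1)
    (x : ℕ → Fin n → ℝ) (hx0 : x 0 = 0)
    (hrec : ∀ k, x (k + 1) = Gmap n α v R (x k)) :
    ∃ m : Fin n → ℝ,
      (∀ i, Filter.Tendsto (fun k => x k i) Filter.atTop (nhds (m i))) ∧
      (∀ i, 0 ≤ m i) ∧ Gmap n α v R m = m ∧
      (∀ z : Fin n → ℝ, (∀ i, 0 ≤ z i) → Gmap n α v R z = z → ∀ i, m i ≤ z i) := by
  obtain ⟨ha0, ha1⟩ := hα
  have hmono : ∀ y z : Fin n → ℝ, (∀ i, 0 ≤ y i) → (∀ i, y i ≤ z i) →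
      ∀ i, Gmap n α v R y i ≤ Gmap n α v R z i := by
    intro y z hy hyz i
    rw [Gmap_apply_aux, Gmap_apply_aux]
    have : ∑ p, R i p * (y p.1 * y p.2) ≤ ∑ p, R i p * (z p.1 * z p.2) := by
      apply Finset.sum_le_sum
      intro p _
      exact mul_le_mul_of_nonneg_left
        (mul_le_mul (hyz _) (hyz _) (hy _) ((hy _).trans (hyz _))) (hR i p)
    have := mul_le_mul_of_nonneg_left this ha0.le
    linarith
  have hnn : ∀ y : Fin n → ℝ, (∀ i, 0 ≤ y i) → ∀ i, 0 ≤ Gmap n α v R y i := by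
    intro y hy i
    rw [Gmap_apply_aux]
    have : 0 ≤ ∑ p, R i p * (y p.1 * y p.2) :=
      Finset.sum_nonneg fun p _ => mul_nonneg (hR i p) (mul_nonneg (hy _) (hy _))
    have h2 := mul_nonneg (sub_nonneg.2 ha1.le) (hv i)
    have h3 := mul_nonneg ha0.le this
    linarith
  have hsum : ∀ y : Fin n → ℝ, ∑ i, Gmap n α v R y i = α * (∑ i, y i) ^ 2 + (1 - α) := by
    intro y
    simp only [Gmap_apply_aux, Finset.sum_add_distrib, ← Finset.mul_sum, hv1]
    rw [Finset.sum_comm]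
    simp only [← Finset.sum_mul, hRs, one_mul, mul_one]
    rw [Fintype.sum_prod_type, sq, Finset.sum_mul_sum]
  have hx : ∀ k i, 0 ≤ x k i := by
    intro k
    induction k with
    | zero => simp [hx0]
    | succ k ih => rw [hrec]; exact hnn _ ih
  have hs : ∀ k, ∑ i, x k i ≤ 1 := by
    intro k
    induction k with
    | zero => simp [hx0]
    | succ k ih =>
      rw [hrec, hsum]
      have h0 : 0 ≤ ∑ i, x k i := Finset.sum_nonneg fun i _ => hx k i
      have : (∑ i, x k i) ^ 2 ≤ 1 := pow_le_one₀ h0 ih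
      nlinarith
  have hstep : ∀ k i, x k i ≤ x (k + 1) i := by
    intro k
    induction k with
    | zero => intro i; rw [hx0]; exact hx 1 i
    | succ k ih =>
      intro i
      rw [hrec (k + 1)]
      conv_lhs => rw [hrec k]
      exact hmono _ _ (hx k) ih i
  have hb : ∀ k i, x k i ≤ 1 := fun k i =>
    (Finset.single_le_sum (f := x k) (fun j _ => hx k j) (Finset.mem_univ i)).trans (hs k)
  have hlim : ∀ i, Filter.Tendsto (fun k => x k i) Filter.atTop (nhds (⨆ k, x k i)) := by
    intro i
    apply tendsto_atTop_ciSup (monotone_nat_of_le_succ fun k => hstep k i)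
    exact ⟨1, by rintro _ ⟨k, rfl⟩; exact hb k i⟩
  refine ⟨fun i => ⨆ k, x k i, hlim, fun i => ge_of_tendsto' (hlim i) fun k => hx k i, ?_, ?_⟩
  · funext i
    have h1 := (hlim i).comp (Filter.tendsto_add_atTop_nat 1)
    refine tendsto_nhds_unique ?_ h1
    have : ((fun k => x k i) ∘ fun a => a + 1) =
        fun k => α * ∑ p, R i p * (x k p.1 * x k p.2) + (1 - α) * v i := by
      funext k
      simp only [Function.comp, hrec, Gmap_apply_aux]
    rw [this, Gmap_apply_aux]
    exact ((tendsto_finsetSum _ fun p _ =>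
      ((hlim p.1).mul (hlim p.2)).const_mul (R i p)).const_mul α).add_const _
  · intro z hz hGz i
    refine le_of_tendsto' (hlim i) fun k => ?_
    revert i
    induction k with
    | zero => intro i; rw [hx0]; exact hz i
    | succ k ih =>
      intro i
      rw [hrec, ← hGz]
      exact hmono _ _ (hx k) ih i
end

section
/- For every α ∈ (0,1) there exists a nonnegative solution x of x = α R(x ⊗ x) + (1-α)v with 1ᵀx = 1, and also a nonnegative solution with 1ᵀx = (1-α)/α. -/
def ScDom {X ι : Type*} (f : ι → X → ℕ) (S : Finset X) : Prop :=
  ∀ y, ∃ i, ∀ x ∈ S, f i y ≤ f i x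

lemma sc_even {X ι : Type*} [Fintype X] [DecidableEq X] [Fintype ι] [DecidableEq ι]
    (f : ι → X → ℕ) (hf : ∀ i, Function.Injective (f i)) (D : Finset X)
    (hcard : D.card + 1 = Fintype.card ι) (hne : D.Nonempty)
    (hM : ∀ k, ∃ y, ∀ l, l ≠ k → ∃ x ∈ D, f l x < f l y)
    (P : Finset X) (hP : ∀ x, x ∈ P ↔ x ∉ D ∧ ScDom f (insert x D)) : Even P.card := by
  classical
  by_cases hD : ScDom f D
  swap
  · have : P = ∅ := by
      rw [Finset.eq_empty_iff_forall_notMem]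
      intro x hx
      apply hD
      intro y
      obtain ⟨i, hi⟩ := ((hP x).1 hx).2 y
      exact ⟨i, fun z hz => hi z (Finset.mem_insert_of_mem hz)⟩
    simp [this]
  have hm : ∀ i, ∃ z ∈ D, ∀ x ∈ D, f i z ≤ f i x := fun i =>
    Finset.exists_min_image D (f i) hne
  choose m hmD hmin using hm
  obtain ⟨i, -, j, -, hij, hmij⟩ := Finset.exists_ne_map_eq_of_card_lt_of_maps_to
    (s := (Finset.univ : Finset ι)) (t := D) (f := m) (by rw [Finset.card_univ]; omega)
    (fun a _ => hmD a)
  -- argmax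
  have hx : ∀ k, ∃ y, (∀ l, l ≠ k → f l (m l) < f l y) ∧
      ∀ z, (∀ l, l ≠ k → f l (m l) < f l z) → f k z ≤ f k y := by
    intro k
    obtain ⟨y, hy⟩ := hM k
    obtain ⟨w, hw, hw2⟩ := Finset.exists_max_image
      (Finset.univ.filter (fun z => ∀ l, l ≠ k → f l (m l) < f l z)) (f k)
      ⟨y, by
        simp only [Finset.mem_filter, Finset.mem_univ, true_and]
        intro l hl
        obtain ⟨x, hx, hxy⟩ := hy l hl
        exact (hmin l x hx).trans_lt hxy⟩
    simp only [Finset.mem_filter, Finset.mem_univ, true_and] at hw hw2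
    exact ⟨w, hw, hw2⟩
  choose X' hX1 hX2 using hx
  have hlow : ∀ k, ∀ d ∈ D, f k (X' k) ≤ f k d := by
    intro k d hd
    obtain ⟨l, hl⟩ := hD (X' k)
    by_cases h : l = k
    · subst h; exact hl d hd
    · have := hX1 k l h
      have := hl (m l) (hmD l)
      omega
  have hroom : ∀ k k', k' ≠ k → m k = m k' → X' k ∈ P := by
    intro k k' hkk hmk
    rw [hP]
    constructor
    · intro hxD
      obtain ⟨l, hl⟩ := hD (X' k)
      have hxl : X' k = m l := hf l (le_antisymm (hl _ (hmD l)) (hmin l _ hxD))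
      by_cases h : l = k
      · have h1 := hX1 k k' hkk
        rw [hxl, h, hmk] at h1
        omega
      · have h1 := hX1 k l h
        rw [← hxl] at h1
        omega
    · intro y
      by_cases hy : ∀ l, l ≠ k → f l (m l) < f l y
      · refine ⟨k, fun x hx => ?_⟩
        rcases Finset.mem_insert.1 hx with rfl | hx
        · exact hX2 k y hy
        · exact (hX2 k y hy).trans (hlow k x hx)
      · push Not at hy
        obtain ⟨l, hlk, hl⟩ := hy
        refine ⟨l, fun x hx => ?_⟩
        rcases Finset.mem_insert.1 hx with rfl | hx
        · exact hl.trans (hX1 k l hlk).le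
        · exact hl.trans (hmin l x hx)
  have hPe : P = {X' i, X' j} := by
    apply Finset.Subset.antisymm
    · intro x hxP
      obtain ⟨hxD, hdom⟩ := (hP x).1 hxP
      obtain ⟨k, hk⟩ := hdom x
      have hsur : ∀ d ∈ D, ∃ l, l ≠ k ∧ m l = d ∧ f l d ≤ f l x := by
        intro d hd
        obtain ⟨l, hl⟩ := hdom d
        have h1 : m l = d := hf l (le_antisymm (hmin l d hd)
          (hl _ (Finset.mem_insert_of_mem (hmD l))))
        refine ⟨l, ?_, h1, hl x (Finset.mem_insert_self _ _)⟩
        rintro rfl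
        have : x = d := hf l (le_antisymm (hk d (Finset.mem_insert_of_mem hd))
          (hl x (Finset.mem_insert_self _ _)))
        exact hxD (this ▸ hd)
      have hinj : Set.InjOn m (Finset.univ.erase k : Finset ι) := by
        apply Finset.injOn_of_card_image_eq
        have : (Finset.univ.erase k).image m = D := by
          apply Finset.Subset.antisymm
          · intro z hz
            obtain ⟨l, -, rfl⟩ := Finset.mem_image.1 hz
            exact hmD l
          · intro d hd
            obtain ⟨l, hl, hl2, -⟩ := hsur d hd
            exact Finset.mem_image.2 ⟨l, by simp [hl], hl2⟩
        rw [this, Finset.card_erase_of_mem (Finset.mem_univ _), Finset.card_univ]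
        omega
      have hxM : ∀ l, l ≠ k → f l (m l) < f l x := by
        intro l hl
        obtain ⟨l', h1, h2, h3⟩ := hsur (m l) (hmD l)
        have : l' = l := hinj (by simp [h1]) (by simp [hl]) h2
        subst this
        refine lt_of_le_of_ne h3 (fun h => hxD ?_)
        rw [← hf _ h]; exact hmD _
      have hxmax : x = X' k := by
        apply hf k
        apply le_antisymm (hX2 k x hxM)
        obtain ⟨l, hl⟩ := hdom (X' k)
        by_cases h : l = k
        · subst h; exact hl x (Finset.mem_insert_self _ _)
        · have := hX1 k l h
          have := hl (m l) (Finset.mem_insert_of_mem (hmD l))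
          omega
      have hk : i = k ∨ j = k := by
        by_contra hcon
        push Not at hcon
        exact hij (hinj (by simp [hcon.1]) (by simp [hcon.2]) hmij)
      rcases hk with rfl | rfl <;> simp [hxmax]
    · intro x hx
      simp only [Finset.mem_insert, Finset.mem_singleton] at hx
      rcases hx with rfl | rfl
      · exact hroom i j hij.symm hmij
      · exact hroom j i hij hmij.symm
  have hne' : X' i ≠ X' j := by
    intro h
    have h1 := hlow i (m i) (hmD i)
    have h2 := hX1 j i hij
    rw [← h] at h2
    omega
  rw [hPe, Finset.card_pair hne']
  exact even_two

/-- The number of doors of a room that is not colorful is even. -/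
lemma sc_doors {X ι : Type*} [DecidableEq X] [Fintype ι] [DecidableEq ι]
    (c : X → ι) (i0 : ι) (S : Finset X) (hcard : S.card = Fintype.card ι)
    (hS : S.image c ≠ Finset.univ) :
    Even (S.filter (fun x => (S.erase x).image c = Finset.univ.erase i0)).card := by
  classical
  by_cases h : S.image c = Finset.univ.erase i0
  swap
  · have : S.filter (fun x => (S.erase x).image c = Finset.univ.erase i0) = ∅ := by
      rw [Finset.filter_eq_empty_iff]
      intro x hx hx2
      have h1 : S.image c = insert (c x) (Finset.univ.erase i0) := by
        rw [← hx2, ← Finset.image_insert, Finset.insert_erase hx]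
      by_cases hc : c x = i0
      · apply hS
        rw [h1, hc, Finset.insert_erase (Finset.mem_univ _)]
      · apply h
        rw [h1, Finset.insert_eq_of_mem (by simp [hc])]
    simp [this]
  have hpos : 0 < Fintype.card ι := Fintype.card_pos_iff.2 ⟨i0⟩
  have hce : (Finset.univ.erase i0).card + 1 = Fintype.card ι := by
    rw [Finset.card_erase_of_mem (Finset.mem_univ _), Finset.card_univ]; omega
  obtain ⟨a, ha, b, hb, hab, hcab⟩ := Finset.exists_ne_map_eq_of_card_lt_of_maps_to
    (s := S) (t := Finset.univ.erase i0) (f := c) (by omega)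
    (fun a ha => by rw [← h]; exact Finset.mem_image_of_mem c ha)
  have key : ∀ a ∈ S, ∀ b ∈ S, a ≠ b → c a = c b →
      (S.erase a).image c = Finset.univ.erase i0 := by
    intro a ha b hb hab hcab
    rw [← h]
    apply Finset.Subset.antisymm (Finset.image_subset_image (Finset.erase_subset _ _))
    intro y hy
    obtain ⟨x, hx, rfl⟩ := Finset.mem_image.1 hy
    by_cases hxa : x = a
    · subst hxa
      exact Finset.mem_image.2 ⟨b, by simp [hb, hab.symm], hcab.symm⟩
    · exact Finset.mem_image.2 ⟨x, by simp [hx, hxa], rfl⟩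
  have : S.filter (fun x => (S.erase x).image c = Finset.univ.erase i0) = {a, b} := by
    apply Finset.Subset.antisymm
    · intro x hx
      obtain ⟨hxS, hx2⟩ := Finset.mem_filter.1 hx
      have hinj : Set.InjOn c (S.erase x : Finset X) := by
        apply Finset.injOn_of_card_image_eq
        rw [hx2, Finset.card_erase_of_mem hxS]; omega
      by_contra hcon
      simp only [Finset.mem_insert, Finset.mem_singleton, not_or] at hcon
      exact hab (hinj (by simp [ha, Ne.symm hcon.1]) (by simp [hb, Ne.symm hcon.2]) hcab)
    · intro x hx
      simp only [Finset.mem_insert, Finset.mem_singleton] at hx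
      rw [Finset.mem_filter]
      rcases hx with rfl | rfl
      · exact ⟨ha, key x ha b hb hab hcab⟩
      · exact ⟨hb, key x hb a ha hab.symm hcab.symm⟩
  rw [this, Finset.card_pair hab]
  exact even_two

lemma scarf {T : Type*} [Fintype T] [Nonempty T] {n : ℕ} (hn : 1 ≤ n)
    (g : Fin n → T → ℕ) (hg : ∀ i, Function.Injective (g i)) (c : T → Fin n) :
    ∃ (σ : Finset T) (C : Finset (Fin n)), (∀ a, ∃ i ∈ C, ∀ b ∈ σ, g i a ≤ g i b) ∧
      ∀ i ∈ C, ∃ b ∈ σ, c b = i := by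
  classical
  obtain ⟨B, hB⟩ : ∃ B, ∀ i a, g i a < B := by
    refine ⟨(Finset.univ.sup fun i => Finset.univ.sup fun a => g i a) + 1, fun i a => ?_⟩
    have h1 : g i a ≤ Finset.univ.sup fun a => g i a :=
      Finset.le_sup (f := fun a => g i a) (Finset.mem_univ a)
    have h2 : (Finset.univ.sup fun a => g i a) ≤
        Finset.univ.sup fun i => Finset.univ.sup fun a => g i a :=
      Finset.le_sup (f := fun i => Finset.univ.sup fun a => g i a) (Finset.mem_univ i)
    omega
  let f : Fin n → T ⊕ Fin n → ℕ := fun i =>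
    Sum.elim (fun a => g i a + 1) (fun j => if j = i then 0 else B + 1 + j)
  have hfl : ∀ i a, f i (Sum.inl a) = g i a + 1 := fun i a => rfl
  have hfr : ∀ i, f i (Sum.inr i) = 0 := fun i => by simp [f]
  have hfr' : ∀ i j, j ≠ i → f i (Sum.inr j) = B + 1 + j := fun i j h => by simp [f, h]
  have hf : ∀ i, Function.Injective (f i) := by
    rintro i (a | j) (b | k) h
    · rw [hfl, hfl] at h
      rw [hg i (Nat.succ_injective h)]
    · have := hB i a
      rw [hfl] at h
      by_cases hk : k = i
      · subst hk; rw [hfr] at h; omega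
      · rw [hfr' _ _ hk] at h; omega
    · have := hB i b
      rw [hfl] at h
      by_cases hk : j = i
      · subst hk; rw [hfr] at h; omega
      · rw [hfr' _ _ hk] at h; omega
    · by_cases hk : k = i <;> by_cases hj : j = i
      · rw [hk, hj]
      · subst hk; rw [hfr, hfr' _ _ hj] at h; omega
      · subst hj; rw [hfr, hfr' _ _ hk] at h; omega
      · rw [hfr' _ _ hj, hfr' _ _ hk] at h
        congr 1; apply Fin.ext; omega
  let col : T ⊕ Fin n → Fin n := Sum.elim c id
  let i0 : Fin n := ⟨0, hn⟩
  have main : ∃ S : Finset (T ⊕ Fin n), ScDom f S ∧ S.image col = Finset.univ := by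
    by_contra hcon
    push Not at hcon
    let P : Finset (Finset (T ⊕ Fin n) × (T ⊕ Fin n)) := Finset.univ.filter fun p =>
      p.1.card + 1 = n ∧ p.1.image col = Finset.univ.erase i0 ∧ p.2 ∉ p.1 ∧
        ScDom f (insert p.2 p.1)
    have hPm : ∀ D x, (D, x) ∈ P ↔ D.card + 1 = n ∧ D.image col = Finset.univ.erase i0 ∧ x ∉ D ∧
        ScDom f (insert x D) := fun D x => by simp [P]
    have heven : Even P.card := by
      rw [Finset.card_eq_sum_card_fiberwise (f := fun p => insert p.2 p.1) (t := Finset.univ)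
        (fun _ _ => by simp)]
      apply Finset.even_sum
      intro S _
      by_cases hS : ScDom f S ∧ S.card = n
      · have := sc_doors col i0 S (by simp [hS.2]) (hcon S hS.1)
        refine (congrArg Even ?_).mpr this
        apply Finset.card_bij (fun p _ => p.2)
        · rintro ⟨D, x⟩ hp
          simp only [Finset.mem_filter, hPm] at hp
          obtain ⟨⟨h1, h2, h3, h4⟩, rfl⟩ := hp
          simp [h3, h2]
        · rintro ⟨D, x⟩ hp ⟨D', x'⟩ hp' hxx
          simp only [Finset.mem_filter, hPm] at hp hp' hxx
          subst hxx
          obtain ⟨⟨h1, h2, h3, h4⟩, h5⟩ := hp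
          obtain ⟨⟨h1', h2', h3', h4'⟩, h5'⟩ := hp'
          have : D = D' := by
            rw [← Finset.erase_insert h3, ← Finset.erase_insert h3', h5, h5']
          rw [this]
        · intro x hx
          obtain ⟨hxS, hx2⟩ := Finset.mem_filter.1 hx
          refine ⟨(S.erase x, x), ?_, rfl⟩
          simp only [Finset.mem_filter, hPm]
          rw [Finset.insert_erase hxS, Finset.card_erase_of_mem hxS]
          refine ⟨⟨by omega, hx2, by simp, hS.1⟩, rfl⟩
      · have : P.filter (fun p => insert p.2 p.1 = S) = ∅ := by
          rw [Finset.filter_eq_empty_iff]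
          rintro ⟨D, x⟩ hp rfl
          obtain ⟨h1, h2, h3, h4⟩ := (hPm _ _).1 hp
          exact hS ⟨h4, by rw [Finset.card_insert_of_notMem h3, h1]⟩
        rw [this]; simp
    have hodd : Odd P.card := by
      let D0 : Finset (T ⊕ Fin n) := (Finset.univ.erase i0).image Sum.inr
      rw [Finset.card_eq_sum_card_fiberwise (f := fun p => p.1) (t := Finset.univ)
        (fun _ _ => by simp), ← Finset.add_sum_erase _ _ (Finset.mem_univ D0)]
      have hD0mem : ∀ k, Sum.inr k ∈ D0 ↔ k ≠ i0 := fun k => by simp [D0]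
      have hD0l : ∀ a, Sum.inl a ∉ D0 := fun k => by simp [D0]
      have hfib : ∀ D, (P.filter (fun p => p.1 = D)).card =
          (Finset.univ.filter fun x => (D, x) ∈ P).card := by
        intro D
        apply Finset.card_bij (fun p _ => p.2)
        · rintro ⟨D, x⟩ hp
          obtain ⟨h1, rfl⟩ := Finset.mem_filter.1 hp
          simpa using h1
        · rintro ⟨D, x⟩ hp ⟨D', x'⟩ hp' hxx
          obtain ⟨h1, rfl⟩ := Finset.mem_filter.1 hp
          obtain ⟨h1', h2⟩ := Finset.mem_filter.1 hp'
          simp only at hxx h2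
          rw [hxx, h2]
        · intro x hx
          exact ⟨(D, x), Finset.mem_filter.2 ⟨(Finset.mem_filter.1 hx).2, rfl⟩, rfl⟩
      apply Odd.add_even
      · rw [hfib]
        obtain ⟨b, -, hb⟩ := Finset.exists_max_image (Finset.univ : Finset T) (g i0)
          Finset.univ_nonempty
        have : (Finset.univ.filter fun x => (D0, x) ∈ P) = {Sum.inl b} := by
          ext x
          simp only [Finset.mem_filter, Finset.mem_univ, true_and, Finset.mem_singleton]
          rw [hPm]
          have hD0dom : ∀ x, ScDom f (insert x D0) → ∀ a, f i0 (Sum.inl a) ≤ f i0 x := by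
            intro x hx a
            obtain ⟨i, hi⟩ := hx (Sum.inl a)
            by_cases h : i = i0
            · subst h; exact hi x (Finset.mem_insert_self _ _)
            · have := hi (Sum.inr i) (Finset.mem_insert_of_mem ((hD0mem i).2 h))
              rw [hfr, hfl] at this
              omega
          constructor
          · rintro ⟨h1, h2, h3, h4⟩
            rcases x with a | j
            · have := hD0dom _ h4 b
              rw [hfl, hfl] at this
              have h5 := hb a (Finset.mem_univ _)
              rw [hg i0 (show g i0 a = g i0 b by omega)]
            · rw [hD0mem, not_not] at h3
              subst h3
              have := hD0dom _ h4 b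
              rw [hfr, hfl] at this
              omega
          · rintro rfl
            refine ⟨?_, ?_, hD0l b, ?_⟩
            · rw [Finset.card_image_of_injective _ Sum.inr_injective,
                Finset.card_erase_of_mem (Finset.mem_univ _)]
              simp; omega
            · rw [Finset.image_image]
              exact Finset.image_id
            · rintro (a | j)
              · refine ⟨i0, fun x hx => ?_⟩
                have hBa := hB i0 a
                have hba := hb a (Finset.mem_univ _)
                rcases Finset.mem_insert.1 hx with rfl | hx
                · rw [hfl, hfl]; omega
                · rcases x with a' | k
                  · exact absurd hx (hD0l _)
                  · rw [hfr' _ _ ((hD0mem k).1 hx), hfl]; omega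
              · exact ⟨j, fun x _ => by rw [hfr]; omega⟩
        rw [this]; simp
      · apply Finset.even_sum
        intro D hD
        have hD : D ≠ D0 := (Finset.mem_erase.1 hD).1
        rw [hfib]
        by_cases hD2 : D.card + 1 = n ∧ D.image col = Finset.univ.erase i0
        swap
        · have : (Finset.univ.filter fun x => (D, x) ∈ P) = ∅ := by
            rw [Finset.filter_eq_empty_iff]
            intro x _ hx
            obtain ⟨h1, h2, -⟩ := (hPm _ _).1 hx
            exact hD2 ⟨h1, h2⟩
          rw [this]; simp
        obtain ⟨h1, h2⟩ := hD2
        have : ∃ a, Sum.inl a ∈ D := by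
          by_contra hno
          push Not at hno
          apply hD
          ext x
          rcases x with a | k
          · simp [hno, hD0l]
          · rw [hD0mem]
            have : k ∈ D.image col ↔ k ≠ i0 := by rw [h2]; simp
            rw [← this, Finset.mem_image]
            constructor
            · intro h; exact ⟨_, h, rfl⟩
            · rintro ⟨x, hx, hxk⟩
              rcases x with a | k'
              · exact absurd hx (hno a)
              · have : k' = k := hxk
                rwa [← this]
        obtain ⟨a, ha⟩ := this
        apply sc_even f hf D (by simp [h1]) ⟨_, ha⟩
        · intro k
          refine ⟨Sum.inr k, fun l hl => ⟨_, ha, ?_⟩⟩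
          rw [hfl, hfr' _ _ hl.symm]
          have := hB l a
          omega
        · intro x
          simp only [Finset.mem_filter, Finset.mem_univ, true_and, hPm, h1, h2]
    exact (Nat.not_even_iff_odd.2 hodd) heven
  obtain ⟨S, hdom, hcol⟩ := main
  refine ⟨Finset.univ.filter fun a => Sum.inl a ∈ S, Finset.univ.filter fun i => Sum.inr i ∉ S,
    ?_, ?_⟩
  · intro a
    obtain ⟨i, hi⟩ := hdom (Sum.inl a)
    refine ⟨i, ?_, ?_⟩
    · simp only [Finset.mem_filter, Finset.mem_univ, true_and]
      intro h
      have := hi _ h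
      rw [hfl, hfr] at this
      omega
    · intro b hb
      have := hi _ (Finset.mem_filter.1 hb).2
      rw [hfl, hfl] at this
      omega
  · intro i hi
    have hi := (Finset.mem_filter.1 hi).2
    have : i ∈ S.image col := by rw [hcol]; simp
    obtain ⟨x, hx, hxi⟩ := Finset.mem_image.1 this
    rcases x with b | k
    · exact ⟨b, by simpa using hx, hxi⟩
    · have : k = i := hxi
      subst this
      exact absurd hx hi

/-- Integer grid version. -/
lemma grid_scarf {n : ℕ} (hn : 1 ≤ n) (N : ℕ) (c : (Fin n → ℕ) → Fin n) :
    ∃ (p : Fin n → ℕ), ∑ i, p i = N ∧ ∀ i, p i ≤ n ∨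
      ∃ q : Fin n → ℕ, ∑ i, q i = N ∧ c q = i ∧ ∀ k, p k ≤ q k + n ∧ q k ≤ p k + n := by
  classical
  let T := {a : Fin n → Fin (N + 1) // ∑ i, (a i : ℕ) = N}
  have mkT : ∀ y : Fin n → ℕ, ∑ i, y i = N → ∃ t : T, ∀ i, ((t.1 i : Fin (N + 1)) : ℕ) = y i := by
    intro y hy
    refine ⟨⟨fun i => ⟨y i, ?_⟩, ?_⟩, fun i => rfl⟩
    · have := Finset.single_le_sum (f := y) (fun _ _ => Nat.zero_le _) (Finset.mem_univ i)
      omega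
    · simpa using hy
  let i0 : Fin n := ⟨0, hn⟩
  have hT : Nonempty T := by
    obtain ⟨t, -⟩ := mkT (Pi.single i0 N) (by simp)
    exact ⟨t⟩
  let e : T → ℕ := fun t => (Fintype.equivFin T t : ℕ)
  have he : ∀ t, e t < Fintype.card T := fun t => (Fintype.equivFin T t).2
  have heinj : Function.Injective e := fun a b h =>
    (Fintype.equivFin T).injective (Fin.ext h)
  let M := Fintype.card T
  let g : Fin n → T → ℕ := fun i t => M * (t.1 i : ℕ) + e t
  have hgle : ∀ i a b, g i a ≤ g i b → (a.1 i : ℕ) ≤ (b.1 i : ℕ) := by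
    intro i a b h
    by_contra hlt
    push Not at hlt
    have h1 : M * ((b.1 i : ℕ) + 1) ≤ M * (a.1 i : ℕ) := Nat.mul_le_mul_left _ hlt
    have h2 := he b
    have h3 : M * (a.1 i : ℕ) + e a ≤ M * (b.1 i : ℕ) + e b := h
    rw [mul_add, mul_one] at h1
    have h4 : M = Fintype.card T := rfl
    omega
  have hg : ∀ i, Function.Injective (g i) := by
    intro i a b h
    have h1 := hgle i a b h.le
    have h2 := hgle i b a h.ge
    have h3 : (a.1 i : ℕ) = b.1 i := le_antisymm h1 h2
    have h4 : M * (a.1 i : ℕ) + e a = M * (b.1 i : ℕ) + e b := h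
    rw [h3] at h4
    exact heinj (by omega)
  obtain ⟨σ, C, h1, h2⟩ := scarf hn g hg (fun t => c (fun i => t.1 i))
  obtain ⟨i1, hi1, -⟩ := h1 hT.some
  obtain ⟨b0, hb0, -⟩ := h2 i1 hi1
  have hmin : ∀ i, ∃ z ∈ σ, ∀ x ∈ σ, (z.1 i : ℕ) ≤ x.1 i := fun i =>
    Finset.exists_min_image σ (fun t => (t.1 i : ℕ)) ⟨b0, hb0⟩
  choose z hz hzmin using hmin
  let m : Fin n → ℕ := fun i => if i ∈ C then ((z i).1 i : ℕ) else 0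
  have hm : ∀ b ∈ σ, ∀ i, m i ≤ b.1 i := by
    intro b hb i
    by_cases h : i ∈ C
    · simp only [m, h, if_true]; exact hzmin i b hb
    · simp [m, h]
  have hsum : N ≤ ∑ i, m i + n := by
    by_contra hlt
    push Not at hlt
    have hs : ∑ i, (m i + 1) = ∑ i, m i + n := by simp [Finset.sum_add_distrib]
    obtain ⟨t, ht⟩ := mkT (fun i => m i + 1 + (Pi.single i1 (N - (∑ i, m i + n)) : Fin n → ℕ) i)
      (by rw [Finset.sum_add_distrib, hs]; simp; omega)
    obtain ⟨i, hi, hb⟩ := h1 t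
    have h3 := hgle _ _ _ (hb (z i) (hz i))
    rw [ht] at h3
    have : m i = (z i).1 i := by simp [m, hi]
    omega
  have hup : ∀ b ∈ σ, ∀ i, (b.1 i : ℕ) ≤ m i + n := by
    intro b hb i
    have h3 : ∑ k, ((b.1 k : ℕ) - m k) + ∑ k, m k = N := by
      rw [← Finset.sum_add_distrib]
      refine Eq.trans ?_ b.2
      exact Finset.sum_congr rfl fun k _ => Nat.sub_add_cancel (hm b hb k)
    have h4 := Finset.single_le_sum (f := fun k => (b.1 k : ℕ) - m k)
      (fun _ _ => Nat.zero_le _) (Finset.mem_univ i)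
    omega
  refine ⟨fun i => b0.1 i, b0.2, fun i => ?_⟩
  by_cases h : i ∈ C
  · right
    obtain ⟨b, hb, hc⟩ := h2 i h
    refine ⟨fun i => b.1 i, b.2, hc, fun k => ?_⟩
    have := hm b hb k
    have := hm b0 hb0 k
    have := hup b hb k
    have := hup b0 hb0 k
    constructor <;> dsimp only <;> omega
  · left
    have := hup b0 hb0 i
    simpa [m, h] using this

lemma approx_fix {n : ℕ} (hn : 1 ≤ n) (g : (Fin n → ℝ) → (Fin n → ℝ))
    (hg : ∀ x ∈ stdSimplex ℝ (Fin n), g x ∈ stdSimplex ℝ (Fin n)) (N : ℕ) (hN : 1 ≤ N) :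
    ∃ p ∈ stdSimplex ℝ (Fin n), ∀ i, ∃ q ∈ stdSimplex ℝ (Fin n),
      dist q p ≤ n / N ∧ q i - n / N ≤ g q i := by
  classical
  have hN0 : (0 : ℝ) < N := by exact_mod_cast hN
  have hnN : (0 : ℝ) ≤ n / N := by positivity
  let s : (Fin n → ℕ) → (Fin n → ℝ) := fun a i => a i / N
  have hs : ∀ a : Fin n → ℕ, ∑ i, a i = N → s a ∈ stdSimplex ℝ (Fin n) := by
    intro a ha
    refine ⟨fun i => by positivity, ?_⟩
    simp only [s]
    rw [← Finset.sum_div, ← Nat.cast_sum, ha, div_self hN0.ne']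
  have hcol : ∀ a : Fin n → ℕ, ∃ i, ∑ i, a i = N → s a i ≤ g (s a) i := by
    intro a
    by_cases ha : ∑ i, a i = N
    · by_contra hcon
      push Not at hcon
      have h1 := (hs a ha).2
      have h2 := (hg _ (hs a ha)).2
      have : ∑ i, g (s a) i < ∑ i, s a i :=
        Finset.sum_lt_sum_of_nonempty ⟨⟨0, hn⟩, Finset.mem_univ _⟩ (fun i _ => (hcon i).2)
      linarith
    · exact ⟨⟨0, hn⟩, fun h => absurd h ha⟩
  choose c hc using hcol
  obtain ⟨p, hp, hpq⟩ := grid_scarf hn N c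
  refine ⟨s p, hs p hp, fun i => ?_⟩
  rcases hpq i with h | ⟨q, hq, rfl, hd⟩
  · refine ⟨s p, hs p hp, by simpa using hnN, ?_⟩
    have h1 := (hg _ (hs p hp)).1 i
    have : s p i ≤ n / N := by
      simp only [s]
      gcongr
    linarith
  · refine ⟨s q, hs q hq, ?_, ?_⟩
    · rw [dist_pi_le_iff hnN]
      intro k
      rw [Real.dist_eq]
      simp only [s]
      rw [← sub_div, abs_div, abs_of_pos hN0]
      gcongr
      have h1 : (p k : ℝ) ≤ q k + n := by exact_mod_cast (hd k).1
      have h2 : (q k : ℝ) ≤ p k + n := by exact_mod_cast (hd k).2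
      rw [abs_le]
      constructor <;> linarith
    · have := hc q hq
      linarith

lemma brouwer_simplex {n : ℕ} (hn : 1 ≤ n) (g : (Fin n → ℝ) → (Fin n → ℝ)) (hcont : Continuous g)
    (hg : ∀ x ∈ stdSimplex ℝ (Fin n), g x ∈ stdSimplex ℝ (Fin n)) :
    ∃ x ∈ stdSimplex ℝ (Fin n), g x = x := by
  have happ := fun N : ℕ => approx_fix hn g hg (N + 1) (by omega)
  choose p hp q hq hd hle using happ
  obtain ⟨x, hx, φ, hφ, hlim⟩ := (isCompact_stdSimplex ℝ (Fin n)).tendsto_subseq hp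
  refine ⟨x, hx, ?_⟩
  have h0 : Filter.Tendsto (fun N : ℕ => (n : ℝ) / ((N + 1 : ℕ) : ℝ)) Filter.atTop (nhds 0) :=
    (tendsto_const_div_atTop_nhds_zero_nat (n : ℝ)).comp (Filter.tendsto_add_atTop_nat 1)
  have h0' := h0.comp hφ.tendsto_atTop
  have hge : ∀ i, x i ≤ g x i := by
    intro i
    have hqlim : Filter.Tendsto (fun N => q (φ N) i) Filter.atTop (nhds x) := by
      rw [tendsto_iff_dist_tendsto_zero] at hlim ⊢
      refine squeeze_zero (fun _ => dist_nonneg)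
        (fun N => dist_triangle _ (p (φ N)) _) ?_
      have h3 : Filter.Tendsto (fun N => dist (q (φ N) i) (p (φ N))) Filter.atTop (nhds 0) :=
        squeeze_zero (fun _ => dist_nonneg) (fun N => hd (φ N) i) h0'
      simpa using h3.add hlim
    have h1 : Filter.Tendsto (fun N => q (φ N) i i - (n : ℝ) / ((φ N + 1 : ℕ) : ℝ))
        Filter.atTop (nhds (x i - 0)) :=
      (((continuous_apply i).tendsto x).comp hqlim).sub h0'
    have h2 : Filter.Tendsto (fun N => g (q (φ N) i) i) Filter.atTop (nhds (g x i)) :=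
      (((continuous_apply i).comp hcont).tendsto x).comp hqlim
    have := le_of_tendsto_of_tendsto' h1 h2 (fun N => hle (φ N) i)
    simpa using this
  have hsum : ∑ i, x i = ∑ i, g x i := by rw [hx.2, (hg x hx).2]
  funext i
  exact ((Finset.sum_eq_sum_iff_of_le (fun i _ => hge i)).1 hsum i (Finset.mem_univ i)).symm

lemma level_fix (n : ℕ) (hn : 1 ≤ n) (α : ℝ) (hα : α ∈ Set.Ioo (0:ℝ) 1)
    (v : Fin n → ℝ) (hv : ∀ i, 0 ≤ v i) (hv1 : ∑ i, v i = 1)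
    (R : Matrix (Fin n) (Fin n × Fin n) ℝ) (hR : ∀ i j, 0 ≤ R i j)
    (hRs : ∀ j, ∑ i, R i j = 1) (u : ℝ) (hu : 0 < u) (huu : α * u ^ 2 + (1 - α) = u) :
    ∃ x : Fin n → ℝ, (∀ i, 0 ≤ x i) ∧ Gmap n α v R x = x ∧ ∑ i, x i = u := by
  obtain ⟨ha0, ha1⟩ := hα
  have hGi : ∀ x i, Gmap n α v R x i = α * ∑ p, R i p * (x p.1 * x p.2) + (1 - α) * v i := by
    intro x i
    simp [Gmap, Matrix.mulVec, dotProduct]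
  have hGsum : ∀ x, ∑ i, Gmap n α v R x i = α * (∑ i, x i) ^ 2 + (1 - α) := by
    intro x
    simp only [hGi]
    rw [Finset.sum_add_distrib, ← Finset.mul_sum, ← Finset.mul_sum, hv1, Finset.sum_comm]
    simp only [← Finset.sum_mul, hRs, one_mul, mul_one]
    rw [Fintype.sum_prod_type, sq, Finset.sum_mul_sum]
  have hcont : Continuous (Gmap n α v R) := by
    apply continuous_pi
    intro i
    simp only [hGi]
    fun_prop
  obtain ⟨y, hy, hfix⟩ := brouwer_simplex hn (fun z => u⁻¹ • Gmap n α v R (u • z))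
    (by fun_prop) (by
      intro z hz
      constructor
      · intro i
        simp only [Pi.smul_apply, smul_eq_mul, hGi]
        have h1 : 0 ≤ ∑ p : Fin n × Fin n, R i p * (u * z p.1 * (u * z p.2)) :=
          Finset.sum_nonneg fun p _ => mul_nonneg (hR _ _)
            (mul_nonneg (mul_nonneg hu.le (hz.1 _)) (mul_nonneg hu.le (hz.1 _)))
        have h2 : 0 ≤ (1 - α) * v i := mul_nonneg (by linarith) (hv i)
        positivity
      · simp only [Pi.smul_apply, smul_eq_mul]
        rw [← Finset.mul_sum, hGsum]
        simp only [Pi.smul_apply, smul_eq_mul]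
        rw [← Finset.mul_sum, hz.2, mul_one, huu, inv_mul_cancel₀ hu.ne'])
  refine ⟨u • y, fun i => mul_nonneg hu.le (hy.1 i), ?_, ?_⟩
  · have h := congrArg (fun w => u • w) hfix
    simpa [smul_smul, mul_inv_cancel₀ hu.ne'] using h
  · simp only [Pi.smul_apply, smul_eq_mul]
    rw [← Finset.mul_sum, hy.2, mul_one]

theorem stmt_7 (n : ℕ) (hn : 1 ≤ n) (α : ℝ) (hα : α ∈ Set.Ioo (0:ℝ) 1)
    (v : Fin n → ℝ) (hv : ∀ i, 0 ≤ v i) (hv1 : ∑ i, v i = 1)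
    (R : Matrix (Fin n) (Fin n × Fin n) ℝ) (hR : ∀ i j, 0 ≤ R i j)
    (hRs : ∀ j, ∑ i, R i j = 1) :
    (∃ x : Fin n → ℝ, (∀ i, 0 ≤ x i) ∧ Gmap n α v R x = x ∧ ∑ i, x i = 1) ∧
    (∃ x : Fin n → ℝ, (∀ i, 0 ≤ x i) ∧ Gmap n α v R x = x ∧
      ∑ i, x i = (1 - α) / α) := by
  have ha0 : 0 < α := hα.1
  have ha1 : α < 1 := hα.2
  refine ⟨level_fix n hn α hα v hv hv1 R hR hRs 1 one_pos (by ring),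
    level_fix n hn α hα v hv hv1 R hR hRs _ (div_pos (by linarith) ha0) ?_⟩
  field_simp
  ring
end

section
/- If α > 1/2, then the minimal nonnegative solution m of x = G(x) satisfies 1ᵀm = (1-α)/α < 1, and there exists a stochastic solution s with s ≥ m componentwise and 1ᵀs = 1. -/
namespace ScarfAux
set_option linter.unusedSectionVars false
variable {I U : Type} [Fintype I] [DecidableEq I] [Fintype U] [DecidableEq U]

def Dom (f : I → U → ℕ) (S : Finset U) : Prop := ∀ t, ∃ i, ∀ s ∈ S, f i t ≤ f i s

noncomputable instance (f : I → U → ℕ) (S : Finset U) : Decidable (Dom f S) := Classical.dec _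

theorem Dom.mono {f : I → U → ℕ} {S T : Finset U} (h : Dom f S) (hT : T ⊆ S) : Dom f T := by
  intro t
  obtain ⟨i, hi⟩ := h t
  exact ⟨i, fun s hs => hi s (hT hs)⟩

/-- room lemma -/
theorem room_even (c : U → I) (i0 : I) (S : Finset U) (hS : S.card = Fintype.card I)
    (hc : S.image c ≠ Finset.univ) :
    Even ((S.powerset.filter (fun τ => τ.card + 1 = Fintype.card I ∧
      τ.image c = Finset.univ.erase i0)).card) := by
  classical
  by_cases hne : (S.powerset.filter (fun τ => τ.card + 1 = Fintype.card I ∧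
      τ.image c = Finset.univ.erase i0)) = ∅
  · rw [hne]; simp
  obtain ⟨τ, hτ⟩ := Finset.nonempty_iff_ne_empty.mpr hne
  rw [Finset.mem_filter, Finset.mem_powerset] at hτ
  obtain ⟨hτS, hτc, hτi⟩ := hτ
  have hinj : Set.InjOn c τ := by
    apply Finset.card_image_iff.mp
    rw [hτi, Finset.card_erase_of_mem (Finset.mem_univ _), Finset.card_univ]; omega
  obtain ⟨x, hxτ, hxS⟩ := (Finset.exists_eq_insert_iff (s := τ) (t := S)).mpr ⟨hτS, by omega⟩
  have hcx : c x ≠ i0 := by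
    intro h
    apply hc
    rw [← hxS, Finset.image_insert, hτi, h, Finset.insert_erase (Finset.mem_univ _)]
  have : c x ∈ τ.image c := by rw [hτi]; simp [hcx]
  obtain ⟨y, hy, hyx⟩ := Finset.mem_image.mp this
  have hxy : x ≠ y := fun h => hxτ (h ▸ hy)
  have key : (S.powerset.filter (fun τ => τ.card + 1 = Fintype.card I ∧
      τ.image c = Finset.univ.erase i0)) = {τ, insert x (τ.erase y)} := by
    ext ρ
    simp only [Finset.mem_filter, Finset.mem_powerset, Finset.mem_insert, Finset.mem_singleton]
    constructor
    · rintro ⟨h1, h2, h3⟩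
      obtain ⟨z, hz, hzS⟩ := (Finset.exists_eq_insert_iff (s := ρ) (t := S)).mpr ⟨h1, by omega⟩
      have hρ : ρ = S.erase z := by rw [← hzS, Finset.erase_insert hz]
      by_cases hzx : z = x
      · left; rw [hρ, hzx, ← hxS, Finset.erase_insert hxτ]
      right
      have hzSm : z ∈ S := by rw [← hzS]; simp
      have hzτ : z ∈ τ := by
        rw [← hxS] at hzSm
        exact (Finset.mem_insert.mp hzSm).resolve_left hzx
      have : c z ∈ ρ.image c := by
        rw [h3, ← hτi]; exact Finset.mem_image_of_mem c hzτ
      obtain ⟨w, hw, hwz⟩ := Finset.mem_image.mp this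
      have hwne : w ≠ z := fun h => hz (h ▸ hw)
      have hwS := h1 hw
      rw [← hxS] at hwS
      have hwx : w = x := by
        rcases Finset.mem_insert.mp hwS with h | h
        · exact h
        · exact absurd (hinj h hzτ hwz) hwne
      have hzy : z = y := hinj hzτ hy (by rw [← hwz, hwx, hyx])
      rw [hρ, hzy, ← hxS, Finset.erase_insert_of_ne hxy]
    · rintro (h | h)
      · subst h; exact ⟨hτS, hτc, hτi⟩
      · subst h
        refine ⟨?_, ?_, ?_⟩
        · rw [← hxS]; exact Finset.insert_subset_insert _ (Finset.erase_subset _ _)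
        · rw [Finset.card_insert_of_notMem (fun h => hxτ (Finset.mem_of_mem_erase h)),
            Finset.card_erase_of_mem hy]
          have := Finset.card_pos.mpr ⟨y, hy⟩
          omega
        · rw [Finset.image_insert, ← hyx, ← Finset.image_insert, Finset.insert_erase hy, hτi]
  rw [key, Finset.card_pair]
  · decide
  · intro h
    apply hxτ; rw [h]; simp

/-- door lemma -/
theorem door_two (f : I → U → ℕ) (hf : ∀ i, Function.Injective (f i)) (τ : Finset U)
    (hτ : Dom f τ) (hcard : τ.card + 1 = Fintype.card I) (hne : τ.Nonempty)
    (hM : ∀ k, ∃ x, ∀ l, l ≠ k → ∃ s ∈ τ, f l s < f l x) :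
    ((Finset.univ : Finset (Finset U)).filter (fun S => Dom f S ∧ S.card = Fintype.card I
      ∧ τ ⊆ S)).card = 2 := by
  classical
  choose mn hmnτ hmn using fun i => Finset.exists_min_image τ (f i) hne
  have hsurj : ∀ t ∈ τ, ∃ i, mn i = t := by
    intro t ht
    obtain ⟨i, hi⟩ := hτ t
    exact ⟨i, hf i (le_antisymm (hmn i t ht) (hi _ (hmnτ i)))⟩
  obtain ⟨i, -, j, -, hij, hmij⟩ := Finset.exists_ne_map_eq_of_card_lt_of_maps_to
    (s := (Finset.univ : Finset I)) (t := τ) (f := mn) (by rw [Finset.card_univ]; omega)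
    (fun a _ => hmnτ a)
  -- erasing i or j leaves a surjection
  have hsurj' : ∀ k, k = i ∨ k = j → ∀ t ∈ τ, ∃ l, l ≠ k ∧ mn l = t := by
    intro k hk t ht
    obtain ⟨l, hl⟩ := hsurj t ht
    by_cases hlk : l = k
    · rcases hk with rfl | rfl
      · exact ⟨j, hij.symm, by rw [← hmij, ← hl, hlk]⟩
      · exact ⟨i, hij, by rw [hmij, ← hl, hlk]⟩
    · exact ⟨l, hlk, hl⟩
  have hM' : ∀ k, ∃ x, (∀ l, l ≠ k → f l (mn l) < f l x) ∧
      ∀ t, (∀ l, l ≠ k → f l (mn l) < f l t) → f k t ≤ f k x := by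
    intro k
    obtain ⟨x, hx⟩ := hM k
    obtain ⟨y, hy, hy'⟩ := Finset.exists_max_image
      ((Finset.univ : Finset U).filter (fun x => ∀ l, l ≠ k → f l (mn l) < f l x)) (f k)
      ⟨x, by
        simp only [Finset.mem_filter, Finset.mem_univ, true_and]
        intro l hl
        obtain ⟨s, hs, hs'⟩ := hx l hl
        exact (hmn l s hs).trans_lt hs'⟩
    simp only [Finset.mem_filter, Finset.mem_univ, true_and] at hy hy'
    exact ⟨y, hy, hy'⟩
  choose X hX1 hX2 using hM'
  have hXτ : ∀ k, k = i ∨ k = j → X k ∉ τ := by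
    intro k hk h
    obtain ⟨l, hl, hl'⟩ := hsurj' k hk _ h
    have := hX1 k l hl
    rw [hl'] at this
    exact lt_irrefl _ this
  have hXlt : ∀ k, f k (X k) ≤ f k (mn k) := by
    intro k
    obtain ⟨l, hl⟩ := hτ (X k)
    by_cases hlk : l = k
    · subst hlk; exact hl _ (hmnτ _)
    · exact absurd (hX1 k l hlk) (not_lt.mpr (hl _ (hmnτ _)))
  have hXne : X i ≠ X j := by
    intro h
    have h1 := hX1 j i hij
    have h2 := hXlt i
    rw [h] at h2
    omega
  have key : ((Finset.univ : Finset (Finset U)).filter (fun S => Dom f S ∧ S.card = Fintype.card I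
      ∧ τ ⊆ S)) = {insert (X i) τ, insert (X j) τ} := by
    ext S
    simp only [Finset.mem_filter, Finset.mem_univ, true_and, Finset.mem_insert,
      Finset.mem_singleton]
    constructor
    · rintro ⟨h1, h2, h3⟩
      obtain ⟨x, hx, hxS⟩ := (Finset.exists_eq_insert_iff (s := τ) (t := S)).mpr ⟨h3, by omega⟩
      obtain ⟨k, hk⟩ := h1 x
      have hxk : f k x < f k (mn k) := by
        refine lt_of_le_of_ne (hk _ (h3 (hmnτ k))) (fun h => hx ?_)
        rw [hf k h]; exact hmnτ k
      -- every element of τ is mn l for l ≠ k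
      have hs : ∀ t ∈ τ, ∃ l, l ≠ k ∧ mn l = t := by
        intro t ht
        obtain ⟨l, hl⟩ := h1 t
        refine ⟨l, ?_, hf l (le_antisymm (hmn l t ht) (hl _ (h3 (hmnτ l))))⟩
        rintro rfl
        have := hl x (by rw [← hxS]; simp)
        have := hmn l t ht
        omega
      have hinj : Set.InjOn mn ((Finset.univ.erase k : Finset I) : Set I) := by
        apply Finset.card_image_iff.mp
        apply le_antisymm Finset.card_image_le
        rw [Finset.card_erase_of_mem (Finset.mem_univ _), Finset.card_univ]
        have : τ ⊆ (Finset.univ.erase k).image mn := by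
          intro t ht
          obtain ⟨l, hl, hl'⟩ := hs t ht
          exact Finset.mem_image.mpr ⟨l, by simp [hl], hl'⟩
        have := Finset.card_le_card this
        omega
      have hkij : k = i ∨ k = j := by
        by_contra h
        push Not at h
        exact hij (hinj (by simp [h.1.symm]) (by simp [h.2.symm]) hmij)
      have hxM : ∀ l, l ≠ k → f l (mn l) < f l x := by
        intro l hl
        by_contra hlt
        push Not at hlt
        -- then the dominating index for mn l
        obtain ⟨l', hl'⟩ := h1 (mn l)
        have e1 : mn l' = mn l :=
          hf l' (le_antisymm (hmn l' _ (hmnτ l)) (hl' _ (h3 (hmnτ l'))))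
        have hl'k : l' ≠ k := by
          rintro rfl
          have := hl' x (by rw [← hxS]; simp)
          rw [← e1] at this
          omega
        have e2 : l' = l := hinj (by simp [hl'k]) (by simp [hl]) e1
        subst e2
        have := hl' x (by rw [← hxS]; simp)
        exact hx (by rw [hf _ (le_antisymm hlt this |>.symm : f l' (mn l') = f l' x) |>.symm]; exact hmnτ _)
      have hxX : x = X k := by
        apply hf k
        apply le_antisymm (hX2 k x hxM)
        obtain ⟨l, hl⟩ := h1 (X k)
        by_cases hlk : l = k
        · subst hlk; exact hl x (by rw [← hxS]; simp)
        · exact absurd (hX1 k l hlk) (not_lt.mpr (hl _ (h3 (hmnτ _))))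
      rcases hkij with h | h
      · left; rw [← hxS, hxX, h]
      · right; rw [← hxS, hxX, h]
    · have main : ∀ k, k = i ∨ k = j → Dom f (insert (X k) τ) ∧
          (insert (X k) τ).card = Fintype.card I ∧ τ ⊆ insert (X k) τ := by
        intro k hk
        refine ⟨?_, ?_, Finset.subset_insert _ _⟩
        · intro t
          by_cases ht : ∀ l, l ≠ k → f l (mn l) < f l t
          · refine ⟨k, fun s hs => ?_⟩
            have h1 := hX2 k t ht
            rcases Finset.mem_insert.mp hs with rfl | h
            · exact h1
            · exact h1.trans ((hXlt k).trans (hmn k s h))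
          · push Not at ht
            obtain ⟨l, hl, hl'⟩ := ht
            refine ⟨l, fun s hs => ?_⟩
            rcases Finset.mem_insert.mp hs with rfl | h
            · exact hl'.trans (hX1 k l hl).le
            · exact hl'.trans (hmn l s h)
        · rw [Finset.card_insert_of_notMem (hXτ k hk), hcard]
      rintro (rfl | rfl)
      · exact main i (Or.inl rfl)
      · exact main j (Or.inr rfl)
  rw [key, Finset.card_pair]
  intro h
  have : X i ∈ insert (X j) τ := by rw [← h]; simp
  rcases Finset.mem_insert.mp this with h | h
  · exact hXne h
  · exact hXτ i (Or.inl rfl) h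

/-- outside door -/
theorem door_one (f : I → U → ℕ) (hf : ∀ i, Function.Injective (f i)) (e : I → U)
    (he : Function.Injective e)
    (he2 : ∀ k u, u ≠ e k → f k (e k) < f k u) (hT : ∃ u, u ∉ Set.range e)
    (i0 : I) (he1 : ∀ l k u, l ≠ k → u ∉ Set.range e → f l u < f l (e k)) :
    ((Finset.univ : Finset (Finset U)).filter (fun S => Dom f S ∧ S.card = Fintype.card I
      ∧ (Finset.univ.erase i0).image e ⊆ S)).card = 1 := by
  classical
  obtain ⟨u0, hu0⟩ := hT
  obtain ⟨x, hx, hxmax⟩ := Finset.exists_max_image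
    ((Finset.univ : Finset U).filter (fun u => u ∉ Set.range e)) (f i0) ⟨u0, by simpa using hu0⟩
  simp only [Finset.mem_filter, Finset.mem_univ, true_and] at hx hxmax
  have hcard : ((Finset.univ.erase i0).image e).card + 1 = Fintype.card I := by
    rw [Finset.card_image_of_injective _ he, Finset.card_erase_of_mem (Finset.mem_univ _),
      Finset.card_univ]
    have := Fintype.card_pos_iff.mpr ⟨i0⟩
    omega
  rw [Finset.card_eq_one]
  refine ⟨insert x ((Finset.univ.erase i0).image e), ?_⟩
  ext S
  simp only [Finset.mem_filter, Finset.mem_univ, true_and, Finset.mem_singleton]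
  constructor
  · rintro ⟨h1, h2, h3⟩
    obtain ⟨y, hy, hyS⟩ := (Finset.exists_eq_insert_iff (t := S)).mpr ⟨h3, by omega⟩
    have hdom : ∀ u, u ∉ Set.range e → f i0 u ≤ f i0 y := by
      intro u hu
      obtain ⟨l, hl⟩ := h1 u
      by_cases h : l = i0
      · subst h; exact hl y (by rw [← hyS]; simp)
      · have := hl (e l) (h3 (Finset.mem_image_of_mem e (by simp [h])))
        have := he2 l u (fun h => hu ⟨l, h.symm⟩)
        omega
    have hyr : y ∉ Set.range e := by
      rintro ⟨k, rfl⟩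
      by_cases hk : k = i0
      · subst hk
        have := hdom u0 hu0
        have := he2 k u0 (fun h => hu0 ⟨k, h.symm⟩)
        omega
      · exact hy (Finset.mem_image_of_mem e (by simp [hk]))
    have : y = x := hf i0 (le_antisymm (hxmax y hyr) (hdom x hx))
    rw [← hyS, this]
  · rintro rfl
    refine ⟨?_, ?_, Finset.subset_insert _ _⟩
    · intro t
      by_cases ht : t ∈ Set.range e
      · obtain ⟨k, rfl⟩ := ht
        refine ⟨k, fun s _ => ?_⟩
        by_cases h : s = e k
        · rw [h]
        · exact (he2 k s h).le
      · refine ⟨i0, fun s hs => ?_⟩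
        rcases Finset.mem_insert.mp hs with rfl | h
        · exact hxmax t ht
        · obtain ⟨k, hk, rfl⟩ := Finset.mem_image.mp h
          exact (he1 i0 k t (Finset.ne_of_mem_erase hk).symm ht).le
    · rw [Finset.card_insert_of_notMem, hcard]
      intro h
      obtain ⟨k, _, hk⟩ := Finset.mem_image.mp h
      exact hx ⟨k, hk⟩

theorem scarf (f : I → U → ℕ) (hf : ∀ i, Function.Injective (f i)) (e : I → U)
    (he1 : ∀ l k u, l ≠ k → u ∉ Set.range e → f l u < f l (e k))
    (he2 : ∀ k u, u ≠ e k → f k (e k) < f k u) (hT : ∃ u, u ∉ Set.range e)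
    (c : U → I) (hc : ∀ k, c (e k) = k) (i0 : I) :
    ∃ S : Finset U, Dom f S ∧ S.image c = Finset.univ := by
  classical
  by_contra hcon
  push Not at hcon
  have he : Function.Injective e := fun a b h => by rw [← hc a, h, hc b]
  let D : Finset (Finset U) := Finset.univ.filter (fun τ => Dom f τ ∧ (τ.card + 1 = Fintype.card I ∧
      τ.image c = Finset.univ.erase i0))
  let Rm : Finset (Finset U) := Finset.univ.filter (fun S => Dom f S ∧ S.card = Fintype.card I)
  have hdc := Finset.sum_card_bipartiteAbove_eq_sum_card_bipartiteBelow
    (s := D) (t := Rm) (fun τ S => τ ⊆ S)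
  have hR : Even (∑ S ∈ Rm, (Finset.bipartiteBelow (fun τ S => τ ⊆ S) D S).card) := by
    apply Finset.even_sum
    intro S hS
    simp only [Rm, Finset.mem_filter, Finset.mem_univ, true_and] at hS
    have := room_even c i0 S hS.2 (hcon S hS.1)
    refine (congrArg (fun X : Finset (Finset U) => Even X.card) ?_).mpr this
    ext τ
    simp only [Finset.bipartiteBelow, D, Finset.mem_filter, Finset.mem_univ, true_and,
      Finset.mem_powerset]
    constructor
    · rintro ⟨⟨a, b⟩, d⟩; exact ⟨d, b⟩
    · rintro ⟨d, b⟩; exact ⟨⟨hS.1.mono d, b⟩, d⟩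
  let τ0 : Finset U := (Finset.univ.erase i0).image e
  have hτ0 : τ0 ∈ D := by
    simp only [D, Finset.mem_filter, Finset.mem_univ, true_and]
    have hcard : τ0.card + 1 = Fintype.card I := by
      simp only [τ0]
      rw [Finset.card_image_of_injective _ he, Finset.card_erase_of_mem (Finset.mem_univ _),
        Finset.card_univ]
      have := Fintype.card_pos_iff.mpr ⟨i0⟩
      omega
    refine ⟨?_, hcard, ?_⟩
    · have h1 := door_one f hf e he he2 hT i0 he1
      obtain ⟨S, hS⟩ := Finset.card_pos.mp (by rw [h1]; exact one_pos)
      simp only [Finset.mem_filter, Finset.mem_univ, true_and] at hS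
      exact hS.1.mono hS.2.2
    · simp only [τ0, Finset.image_image]
      rw [show c ∘ e = id from funext hc, Finset.image_id]
  have hA : ∀ τ, Finset.bipartiteAbove (fun τ S => τ ⊆ S) Rm τ =
      (Finset.univ : Finset (Finset U)).filter (fun S => Dom f S ∧ S.card = Fintype.card I
      ∧ τ ⊆ S) := by
    intro τ
    ext S
    simp only [Finset.bipartiteAbove, Rm, Finset.mem_filter, Finset.mem_univ, true_and, and_assoc]
  rw [← hdc, ← Finset.add_sum_erase _ _ hτ0, hA, door_one f hf e he he2 hT i0 he1] at hR
  have hE : Even (∑ τ ∈ D.erase τ0, (Finset.bipartiteAbove (fun τ S => τ ⊆ S) Rm τ).card) := by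
    apply Finset.even_sum
    intro τ hτ
    obtain ⟨hne, hτD⟩ := Finset.mem_erase.mp hτ
    simp only [D, Finset.mem_filter, Finset.mem_univ, true_and] at hτD
    have hu : ∃ u ∈ τ, u ∉ Set.range e := by
      by_contra hall
      push Not at hall
      apply hne
      apply Finset.eq_of_subset_of_card_le
      · intro u hu
        obtain ⟨k, rfl⟩ := hall u hu
        have := Finset.mem_image_of_mem c hu
        rw [hτD.2.2, hc] at this
        exact Finset.mem_image_of_mem e this
      · simp only [D, Finset.mem_filter, Finset.mem_univ, true_and] at hτ0
        omega
    obtain ⟨u, hu, hur⟩ := hu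
    rw [hA, door_two f hf τ hτD.1 hτD.2.1 ⟨u, hu⟩
      (fun k => ⟨e k, fun l hl => ⟨u, hu, he1 l k u hl hur⟩⟩)]
    decide
  have := hR.add hE
  rw [add_assoc, ← two_mul, add_comm] at this
  exact absurd this (by simp)

theorem grid (n N : ℕ) (hn : 1 ≤ n) (c : (Fin n → ℕ) → Fin n) :
    ∃ x0 : Fin n → ℕ, ∑ i, x0 i = N ∧ ∀ i, x0 i ≤ n ∨ ∃ x : Fin n → ℕ, ∑ i, x i = N ∧ c x = i ∧
      ∀ j, x j ≤ x0 j + n ∧ x0 j ≤ x j + n := by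
  classical
  let T : Type := {x : Fin n → ℕ // x ∈ Finset.piAntidiag Finset.univ N}
  haveI : Fintype T := inferInstanceAs
    (Fintype {x : Fin n → ℕ // x ∈ Finset.piAntidiag Finset.univ N})
  have hTsum : ∀ x : T, ∑ i, x.1 i = N := fun x => (Finset.mem_piAntidiag.mp x.2).1
  have hmk : ∀ x : Fin n → ℕ, ∑ i, x i = N → x ∈ Finset.piAntidiag Finset.univ N :=
    fun x hx => Finset.mem_piAntidiag.mpr ⟨hx, fun i _ => Finset.mem_univ i⟩
  let K := Fintype.card T
  let ε : T ≃ Fin K := Fintype.equivFin T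
  let B := 1 + (N + 1) * K
  let f : Fin n → (Fin n ⊕ T) → ℕ := fun i u =>
    Sum.elim (fun k => if k = i then 0 else B + k.1) (fun x => 1 + x.1 i * K + (ε x).1) u
  have hxN : ∀ (x : T) i, x.1 i ≤ N := by
    intro x i
    exact (Finset.single_le_sum (f := x.1) (fun _ _ => Nat.zero_le _)
      (Finset.mem_univ i)).trans (hTsum x).le
  have hlt : ∀ i (x : T), f i (Sum.inr x) < B := by
    intro i x
    have h1 := (ε x).2
    have h2 : x.1 i * K ≤ N * K := Nat.mul_le_mul_right _ (hxN x i)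
    simp only [f, Sum.elim_inr, B]
    linarith
  have hle : ∀ i (x y : T), f i (Sum.inr x) ≤ f i (Sum.inr y) → x.1 i ≤ y.1 i := by
    intro i x y h
    simp only [f, Sum.elim_inr] at h
    have h1 := (ε y).2
    by_contra hc
    push Not at hc
    have : (y.1 i + 1) * K ≤ x.1 i * K := Nat.mul_le_mul_right _ hc
    linarith
  have hf : ∀ i, Function.Injective (f i) := by
    intro i u w h
    rcases u with k | x <;> rcases w with l | y
    · simp only [f, Sum.elim_inl] at h
      congr 1
      split_ifs at h with h1 h2 h3
      · rw [h1, h2]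
      · simp only [B] at h; omega
      · simp only [B] at h; omega
      · exact Fin.ext (by omega)
    · have := hlt i y
      simp only [f, Sum.elim_inl, Sum.elim_inr] at h this
      split_ifs at h <;> omega
    · have := hlt i x
      simp only [f, Sum.elim_inl, Sum.elim_inr] at h this
      split_ifs at h <;> omega
    · have e1 := le_antisymm (hle i x y h.le) (hle i y x h.ge)
      simp only [f, Sum.elim_inr, e1] at h
      congr 1
      exact ε.injective (Fin.ext (by omega))
  let i00 : Fin n := ⟨0, hn⟩
  obtain ⟨S, hdom, hcol⟩ := scarf f hf Sum.inl
    (by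
      rintro l k (u | x) hlk hu
      · exact absurd ⟨u, rfl⟩ hu
      · have := hlt l x
        have e : f l (Sum.inl k) = B + k.1 := by simp [f, hlk.symm]
        omega)
    (by
      rintro k (u | x) hu
      · have : u ≠ k := fun h => hu (by rw [h])
        simp [f, this, B]
      · simp only [f, Sum.elim_inl, Sum.elim_inr, if_true]; omega)
    ⟨Sum.inr ⟨Pi.single i00 N, hmk _ (by simp)⟩, by simp⟩
    (Sum.elim id (fun x => c x.1)) (fun k => rfl) i00
  let C : Finset (Fin n) := Finset.univ.filter (fun i => ∃ x : T, Sum.inr x ∈ S ∧ c x.1 = i)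
  have hC : ∀ i, i ∉ C → Sum.inl i ∈ S := by
    intro i hi
    have : i ∈ S.image (Sum.elim id (fun x : T => c x.1)) := by rw [hcol]; simp
    obtain ⟨u, hu, hui⟩ := Finset.mem_image.mp this
    rcases u with k | x
    · have : k = i := hui
      rwa [← this]
    · exact absurd (by simp only [C, Finset.mem_filter, Finset.mem_univ, true_and]; exact ⟨x, hu, hui⟩) hi
  have hdom' : ∀ y : Fin n → ℕ, ∑ i, y i = N → ∃ i ∈ C, ∀ x : T, Sum.inr x ∈ S → y i ≤ x.1 i := by
    intro y hy
    obtain ⟨i, hi⟩ := hdom (Sum.inr ⟨y, hmk y hy⟩)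
    refine ⟨i, ?_, fun x hx => hle i ⟨y, hmk y hy⟩ x (hi _ hx)⟩
    by_contra hiC
    have := hi _ (hC i hiC)
    simp [f] at this
  obtain ⟨iC, hiC, -⟩ := hdom' (Pi.single i00 N) (by simp)
  obtain ⟨x0, hx0, -⟩ : ∃ x : T, Sum.inr x ∈ S ∧ c x.1 = iC := by simpa [C] using hiC
  let σ : Finset T := Finset.univ.filter (fun x => Sum.inr x ∈ S)
  have hσ : σ.Nonempty := ⟨x0, by simpa [σ] using hx0⟩
  choose q hqσ hq using fun i => Finset.exists_min_image σ (fun x => x.1 i) hσ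
  let p : Fin n → ℕ := fun i => (q i).1 i
  have hqS : ∀ i, Sum.inr (q i) ∈ S := fun i => by simpa [σ] using hqσ i
  have hp : ∀ i (x : T), Sum.inr x ∈ S → p i ≤ x.1 i := fun i x hx => hq i x (by simpa [σ] using hx)
  have hsum : N < ∑ i ∈ C, (p i + 1) := by
    by_contra hle'
    push Not at hle'
    let y : Fin n → ℕ := fun i => (if i ∈ C then p i + 1 else 0) +
      (if i = iC then N - ∑ i ∈ C, (p i + 1) else 0)
    have hy : ∑ i, y i = N := by
      simp only [y, Finset.sum_add_distrib, Finset.sum_ite_mem, Finset.univ_inter,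
        Finset.sum_ite_eq', Finset.mem_univ, if_true]
      simp only [Finset.sum_add_distrib] at hle'
      omega
    obtain ⟨i, hi, hi'⟩ := hdom' y hy
    have := hi' (q i) (hqS i)
    simp only [y, hi, if_true] at this
    change p i + 1 + _ ≤ p i at this
    omega
  have hCn : C.card ≤ n := by simpa using Finset.card_le_univ C
  simp only [Finset.sum_add_distrib, Finset.sum_const, smul_eq_mul, mul_one] at hsum
  have hupC : ∀ (x : T), Sum.inr x ∈ S → ∀ i ∈ C, x.1 i ≤ p i + n := by
    intro x hx i hi
    have h1 : ∑ j ∈ C, x.1 j ≤ N := by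
      exact (Finset.sum_le_sum_of_subset (Finset.subset_univ _)).trans (hTsum x).le
    rw [← Finset.add_sum_erase C _ hi] at h1 hsum
    have h2 : ∑ j ∈ C.erase i, p j ≤ ∑ j ∈ C.erase i, x.1 j :=
      Finset.sum_le_sum (fun j _ => hp j x hx)
    omega
  have hup : ∀ (x : T), Sum.inr x ∈ S → ∀ i, i ∉ C → x.1 i ≤ n := by
    intro x hx i hi
    have h1 : ∑ j ∈ insert i C, x.1 j ≤ N := by
      exact (Finset.sum_le_sum_of_subset (Finset.subset_univ _)).trans (hTsum x).le
    rw [Finset.sum_insert hi] at h1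
    have h2 : ∑ j ∈ C, p j ≤ ∑ j ∈ C, x.1 j :=
      Finset.sum_le_sum (fun j _ => hp j x hx)
    omega
  refine ⟨x0.1, hTsum x0, fun i => ?_⟩
  by_cases hi : i ∈ C
  · right
    obtain ⟨x, hx, hxi⟩ : ∃ x : T, Sum.inr x ∈ S ∧ c x.1 = i := by simpa [C] using hi
    refine ⟨x.1, hTsum x, hxi, fun j => ?_⟩
    by_cases hj : j ∈ C
    · have a1 := hupC x hx j hj
      have a2 := hupC x0 hx0 j hj
      have a3 := hp j x hx
      have a4 := hp j x0 hx0
      omega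
    · have a1 := hup x hx j hj
      have a2 := hup x0 hx0 j hj
      omega
  · left; exact hup x0 hx0 i hi

open Filter Topology in
theorem brouwer (n : ℕ) (hn : 1 ≤ n) (g : (Fin n → ℝ) → (Fin n → ℝ)) (hg : Continuous g)
    (hmaps : ∀ x ∈ stdSimplex ℝ (Fin n), g x ∈ stdSimplex ℝ (Fin n)) :
    ∃ x ∈ stdSimplex ℝ (Fin n), g x = x := by
  classical
  have step : ∀ N : ℕ, ∃ x0 ∈ stdSimplex ℝ (Fin n), ∃ z : Fin n → Fin n → ℝ,
      ∀ i, (∀ j, |z i j - x0 j| ≤ (n : ℝ) / ((N : ℝ) + 1)) ∧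
        z i i - (n : ℝ) / ((N : ℝ) + 1) ≤ g (z i) i := by
    intro N
    have hN : (0 : ℝ) < (N : ℝ) + 1 := by positivity
    let r : (Fin n → ℕ) → (Fin n → ℝ) := fun x i => (x i : ℝ) / ((N : ℝ) + 1)
    have hr : ∀ x : Fin n → ℕ, ∑ i, x i = N + 1 → r x ∈ stdSimplex ℝ (Fin n) := by
      intro x hx
      refine ⟨fun i => by positivity, ?_⟩
      simp only [r]
      rw [← Finset.sum_div, ← Nat.cast_sum, hx]
      push_cast
      exact div_self hN.ne'
    have hcol : ∀ x : Fin n → ℕ, ∃ i, ∑ i, x i = N + 1 → r x i ≤ g (r x) i := by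
      intro x
      by_cases hx : ∑ i, x i = N + 1
      · have h1 := hr x hx
        have h2 := hmaps _ h1
        obtain ⟨i, -, hi⟩ := Finset.exists_le_of_sum_le (s := (Finset.univ : Finset (Fin n)))
          (f := r x) (g := g (r x)) ⟨⟨0, hn⟩, Finset.mem_univ _⟩ (by rw [h1.2, h2.2])
        exact ⟨i, fun _ => hi⟩
      · exact ⟨⟨0, hn⟩, fun h => absurd h hx⟩
    choose c hc using hcol
    obtain ⟨x0, hx0, H⟩ := grid n (N + 1) hn c
    refine ⟨r x0, hr x0 hx0, ?_⟩
    have : ∀ i, ∃ z : Fin n → ℝ, (∀ j, |z j - r x0 j| ≤ (n : ℝ) / ((N : ℝ) + 1)) ∧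
        z i - (n : ℝ) / ((N : ℝ) + 1) ≤ g z i := by
      intro i
      rcases H i with h | ⟨x, hx, hxi, hxj⟩
      · refine ⟨r x0, fun j => by simp; positivity, ?_⟩
        have h1 := (hmaps _ (hr x0 hx0)).1 i
        have h2 : r x0 i ≤ (n : ℝ) / ((N : ℝ) + 1) := by
          simp only [r]; gcongr
        linarith
      · refine ⟨r x, fun j => ?_, ?_⟩
        · simp only [r]
          rw [← sub_div, abs_div, abs_of_pos hN]
          gcongr
          obtain ⟨a, b⟩ := hxj j
          have a' : (x j : ℝ) ≤ x0 j + n := by exact_mod_cast a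
          have b' : (x0 j : ℝ) ≤ x j + n := by exact_mod_cast b
          rw [abs_le]; constructor <;> linarith
        · have := hc x hx
          rw [hxi] at this
          have h3 : (0 : ℝ) ≤ (n : ℝ) / ((N : ℝ) + 1) := by positivity
          linarith
    choose z hz using this
    exact ⟨z, hz⟩
  choose x hx z hz using step
  obtain ⟨s, hs, φ, hφ, hlim⟩ := (isCompact_stdSimplex ℝ (Fin n)).tendsto_subseq hx
  have hε : Tendsto (fun N : ℕ => (n : ℝ) / ((φ N : ℝ) + 1)) atTop (𝓝 0) := by
    have h1 : Tendsto (fun N : ℕ => (n : ℝ) / ((N : ℝ) + 1)) atTop (𝓝 0) := by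
      have := (tendsto_const_div_atTop_nhds_zero_nat (n : ℝ)).comp (tendsto_add_atTop_nat 1)
      refine this.congr (fun N => ?_)
      simp
    exact h1.comp hφ.tendsto_atTop
  have hzl : ∀ i, Tendsto (fun N => z (φ N) i) atTop (𝓝 s) := by
    intro i
    rw [tendsto_pi_nhds]
    intro j
    have h1 : Tendsto (fun N => x (φ N) j) atTop (𝓝 (s j)) := (tendsto_pi_nhds.mp hlim) j
    have h2 : Tendsto (fun N => z (φ N) i j - x (φ N) j) atTop (𝓝 0) :=
      squeeze_zero_norm (fun N => (hz (φ N) i).1 j) hε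
    simpa using h2.add h1
  have hge : ∀ i, s i ≤ g s i := by
    intro i
    have h1 : Tendsto (fun N => z (φ N) i i - (n : ℝ) / ((φ N : ℝ) + 1)) atTop (𝓝 (s i - 0)) :=
      ((tendsto_pi_nhds.mp (hzl i)) i).sub hε
    have h2 : Tendsto (fun N => g (z (φ N) i) i) atTop (𝓝 (g s i)) :=
      (tendsto_pi_nhds.mp ((hg.tendsto s).comp (hzl i))) i
    have := le_of_tendsto_of_tendsto' h1 h2 (fun N => (hz (φ N) i).2)
    simpa using this
  refine ⟨s, hs, ?_⟩
  have heq := (Finset.sum_eq_sum_iff_of_le (s := Finset.univ) (fun i _ => hge i)).mp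
    (by rw [hs.2, (hmaps s hs).2])
  funext i
  exact (heq i (Finset.mem_univ i)).symm

end ScarfAux

theorem exists_fix (n : ℕ) (hn : 1 ≤ n) (α : ℝ) (h0 : 0 < α) (h1 : α < 1)
    (v : Fin n → ℝ) (hv : ∀ i, 0 ≤ v i) (hv1 : ∑ i, v i = 1)
    (R : Matrix (Fin n) (Fin n × Fin n) ℝ) (hR : ∀ i j, 0 ≤ R i j)
    (hsum : ∀ x, ∑ i, Gmap n α v R x i = α * (∑ i, x i) ^ 2 + (1 - α))
    (b : ℝ) (hb : 0 < b) (hb2 : α * b ^ 2 + (1 - α) = b) :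
    ∃ z : Fin n → ℝ, (∀ i, 0 ≤ z i) ∧ Gmap n α v R z = z ∧ ∑ i, z i = b := by
  obtain ⟨y, hy, hfix⟩ := ScarfAux.brouwer n hn (fun y => b⁻¹ • Gmap n α v R (b • y))
    (by
      unfold Gmap
      have hc : Continuous (fun y : Fin n → ℝ => R.mulVec
          (fun p : Fin n × Fin n => (b • y) p.1 * (b • y) p.2)) := by
        refine Continuous.matrix_mulVec continuous_const ?_
        simp only [Pi.smul_apply, smul_eq_mul]
        fun_prop
      fun_prop)
    (by
      intro x hx
      constructor
      · intro i
        have : 0 ≤ Gmap n α v R (b • x) i := by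
          simp only [Gmap, Pi.add_apply, Pi.smul_apply, smul_eq_mul, Matrix.mulVec, dotProduct]
          have h3 : 0 ≤ ∑ p : Fin n × Fin n, R i p * (b * x p.1 * (b * x p.2)) :=
            Finset.sum_nonneg (fun p _ => mul_nonneg (hR i p)
              (mul_nonneg (mul_nonneg hb.le (hx.1 _)) (mul_nonneg hb.le (hx.1 _))))
          have h4 := mul_nonneg (sub_nonneg.mpr h1.le) (hv i)
          have h5 := mul_nonneg h0.le h3
          linarith
        simp only [Pi.smul_apply, smul_eq_mul]
        exact mul_nonneg (inv_nonneg.mpr hb.le) this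
      · simp only [Pi.smul_apply, smul_eq_mul]
        rw [← Finset.mul_sum, hsum]
        simp only [Pi.smul_apply, smul_eq_mul]
        rw [← Finset.mul_sum, hx.2, mul_one, hb2]
        exact inv_mul_cancel₀ hb.ne')
  refine ⟨b • y, fun i => mul_nonneg hb.le (hy.1 i), ?_, ?_⟩
  · have : b • (b⁻¹ • Gmap n α v R (b • y)) = b • y := congrArg (fun w => b • w) hfix
    rwa [smul_inv_smul₀ hb.ne'] at this
  · simp only [Pi.smul_apply, smul_eq_mul]
    rw [← Finset.mul_sum, hy.2, mul_one]

theorem stmt_9 (n : ℕ) (hn : 1 ≤ n) (α : ℝ) (hα : α ∈ Set.Ioo (1/2 : ℝ) 1)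
    (v : Fin n → ℝ) (hv : ∀ i, 0 ≤ v i) (hv1 : ∑ i, v i = 1)
    (R : Matrix (Fin n) (Fin n × Fin n) ℝ) (hR : ∀ i j, 0 ≤ R i j)
    (hRs : ∀ j, ∑ i, R i j = 1)
    (m : Fin n → ℝ) (hm0 : ∀ i, 0 ≤ m i) (hmfix : Gmap n α v R m = m)
    (hmin : ∀ z : Fin n → ℝ, (∀ i, 0 ≤ z i) → Gmap n α v R z = z → ∀ i, m i ≤ z i) :
    ∑ i, m i = (1 - α) / α ∧ (1 - α) / α < 1 ∧
    ∃ s : Fin n → ℝ, (∀ i, m i ≤ s i) ∧ Gmap n α v R s = s ∧ ∑ i, s i = 1 := by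
  obtain ⟨ha, ha1⟩ := hα
  have h0 : 0 < α := by linarith
  have hsum : ∀ x, ∑ i, Gmap n α v R x i = α * (∑ i, x i) ^ 2 + (1 - α) := by
    intro x
    simp only [Gmap, Pi.add_apply, Pi.smul_apply, smul_eq_mul, Matrix.mulVec, dotProduct]
    rw [Finset.sum_add_distrib, ← Finset.mul_sum, ← Finset.mul_sum, hv1, mul_one,
      Finset.sum_comm]
    simp only [← Finset.sum_mul, hRs, one_mul]
    rw [sq, Finset.sum_mul_sum, Fintype.sum_prod_type]
  have hlt : (1 - α) / α < 1 := by rw [div_lt_one h0]; linarith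
  have hpos : 0 < (1 - α) / α := div_pos (by linarith) h0
  refine ⟨?_, hlt, ?_⟩
  · obtain ⟨z, hz0, hzf, hzs⟩ := exists_fix n hn α h0 ha1 v hv hv1 R hR hsum ((1 - α) / α) hpos
      (by field_simp; ring)
    have hle : ∑ i, m i ≤ (1 - α) / α := by
      rw [← hzs]; exact Finset.sum_le_sum (fun i _ => hmin z hz0 hzf i)
    have hq := hsum m
    rw [hmfix] at hq
    have hfac : (∑ i, m i - 1) * (α * ∑ i, m i - (1 - α)) = 0 := by linarith
    rcases mul_eq_zero.mp hfac with h | h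
    · linarith
    · rw [eq_div_iff h0.ne']; linarith
  · obtain ⟨z, hz0, hzf, hzs⟩ := exists_fix n hn α h0 ha1 v hv hv1 R hR hsum 1 one_pos (by ring)
    exact ⟨z, hmin z hz0 hzf, hzf, hzs⟩
end
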